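/- arXiv:2601.10185 — 4 statements merged into one kernel-verified Lean document; each statement's English description precedes it below -/
import Mathlib

section
/- Let a ∈ ℝ², c ∈ ℝ, and define J₁(t,x) = c Σ_{k=1}^∞ (t/2)^k a·∇(−Δ)^kG(t,x)/(k·k!) for t > 0, x ∈ ℝ². Then J₁ satisfies the self-similar scaling law λ³ J₁(λ²t, λx) = J₁(t,x) for all λ > 0, t > 0, x ∈ ℝ²; consequently, for every 1 ≤ q ≤ ∞ and t > 0, ‖J₁(t)‖_{L^q(ℝ²)} = t^{−γ_q−1/2} ‖J₁(1)‖_{L^q(ℝ²)}. -/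
open MeasureTheory Real Filter Asymptotics ENNReal

noncomputable section

/-- The plane `ℝ²`, realized as a Euclidean space. -/
abbrev E2 : Type := EuclideanSpace ℝ (Fin 2)

/-- The two-dimensional heat kernel `G(t,x) = (4πt)⁻¹ exp(-|x|²/(4t))`. -/
def G (t : ℝ) (x : E2) : ℝ := (4 * π * t)⁻¹ * Real.exp (-‖x‖ ^ 2 / (4 * t))

/-- Partial derivative `∂_j` in the `j`-th coordinate direction. -/
def pd (j : Fin 2) (f : E2 → ℝ) (x : E2) : ℝ := fderiv ℝ f x (EuclideanSpace.single j 1)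

/-- The decay exponent `γ_q = 1 - 1/q` (with the convention `γ_∞ = 1`). -/
def gam (q : ℝ≥0∞) : ℝ := 1 - (q.toReal)⁻¹

/-- The negative Laplacian `-Δ`. -/
def negLap (f : E2 → ℝ) (x : E2) : ℝ := -(pd 0 (pd 0 f) x + pd 1 (pd 1 f) x)

lemma pd_scale (j : Fin 2) (A l : ℝ) (f : E2 → ℝ) :
    pd j (fun y => A * f (l • y)) = fun y => (A * l) * pd j f (l • y) := by
  funext x
  have h1 : (fun y => A * f (l • y)) = A • (fun y => f (l • y)) := rfl
  unfold pd
  rw [h1, fderiv_const_smul_field, Pi.smul_apply, fderiv_comp_smul]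
  simp [mul_assoc]

lemma negLap_scale (A l : ℝ) (f : E2 → ℝ) :
    negLap (fun y => A * f (l • y)) = fun y => (A * l ^ 2) * negLap f (l • y) := by
  funext x
  unfold negLap
  simp only [pd_scale]
  ring

lemma negLap_iter_scale (k : ℕ) (A l : ℝ) (f : E2 → ℝ) :
    negLap^[k] (fun y => A * f (l • y)) = fun y => (A * l ^ (2 * k)) * negLap^[k] f (l • y) := by
  induction k with
  | zero => simp
  | succ k ih =>
    rw [Function.iterate_succ_apply', ih, negLap_scale, Function.iterate_succ_apply']
    funext y
    ring

lemma G_scale (l t : ℝ) (hl : 0 < l) (ht : 0 < t) :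
    G t = fun y => l ^ 2 * G (l ^ 2 * t) (l • y) := by
  funext y
  unfold G
  have h : -‖l • y‖ ^ 2 / (4 * (l ^ 2 * t)) = -‖y‖ ^ 2 / (4 * t) := by
    rw [norm_smul, Real.norm_eq_abs, mul_pow, sq_abs]
    field_simp
  rw [h]
  have := Real.pi_pos
  field_simp

lemma eLpNorm_dilate (f : E2 → ℝ) (q : ℝ≥0∞) (l : ℝ) (hl : 0 < l) :
    eLpNorm (fun y => f (l • y)) q volume
      = ENNReal.ofReal ((l ^ 2)⁻¹) ^ (1 / q).toReal * eLpNorm f q volume := by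
  have hm := Measure.map_addHaar_smul (volume : Measure E2) hl.ne'
  have he : MeasurableEmbedding (fun y : E2 => l • y) := measurableEmbedding_const_smul₀ hl.ne'
  have h := he.eLpNorm_map_measure (g := f) (p := q) (μ := volume)
  change Measure.map (fun y : E2 => l • y) volume = _ at hm
  rw [hm] at h
  have hfin : Module.finrank ℝ E2 = 2 := by simp
  rw [hfin, abs_of_pos (by positivity), eLpNorm_smul_measure_of_ne_zero
    (by simpa using hl.ne')] at h
  exact h.symm

/-- **Proposition (self-similar scaling of the nonlinear distortion `J₁`).**
`J₁(t,x) = c Σ_{k≥1} (t/2)^k a·∇(−Δ)^k G(t,x)/(k·k!)` satisfies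
`λ³ J₁(λ²t, λx) = J₁(t,x)`, hence `‖J₁(t)‖_{L^q} = t^{−γ_q−1/2} ‖J₁(1)‖_{L^q}`. -/
theorem distortion_scaling_law
    (a : E2) (c : ℝ) (J₁ : ℝ → E2 → ℝ)
    (hJ₁ : ∀ t : ℝ, 0 < t → ∀ x : E2,
      J₁ t x = c * ∑' k : ℕ, (t / 2) ^ (k + 1) *
        (∑ j : Fin 2, a j * pd j (negLap^[k + 1] (G t)) x) /
          (((k + 1) * Nat.factorial (k + 1) : ℕ) : ℝ)) :
    (∀ l : ℝ, 0 < l → ∀ t : ℝ, 0 < t → ∀ x : E2,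
        l ^ 3 * J₁ (l ^ 2 * t) (l • x) = J₁ t x) ∧
    (∀ q : ℝ≥0∞, 1 ≤ q → ∀ t : ℝ, 0 < t →
        eLpNorm (J₁ t) q volume
          = ENNReal.ofReal (t ^ (-gam q - 1/2)) * eLpNorm (J₁ 1) q volume) := by
  have key : ∀ l : ℝ, 0 < l → ∀ t : ℝ, 0 < t → ∀ x : E2,
        l ^ 3 * J₁ (l ^ 2 * t) (l • x) = J₁ t x := by
    intro l hl t ht x
    rw [hJ₁ t ht x, hJ₁ (l ^ 2 * t) (by positivity) (l • x), mul_left_comm, ← tsum_mul_left]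
    congr 1
    refine tsum_congr fun k => ?_
    rw [G_scale l t hl ht]
    simp only [negLap_iter_scale, pd_scale, Fin.sum_univ_two]
    ring
  refine ⟨key, fun q hq t ht => ?_⟩
  have hs : 0 < √t := Real.sqrt_pos.2 ht
  have hs2 : √t ^ 2 = t := Real.sq_sqrt ht.le
  have h1 : J₁ 1 = (√t ^ 3) • (fun y => J₁ t (√t • y)) := by
    funext y
    have := key (√t) hs 1 one_pos y
    rw [hs2, mul_one] at this
    exact this.symm
  have h3 : √t ^ 3 = t ^ (3 / 2 : ℝ) := by
    rw [Real.sqrt_eq_rpow, ← Real.rpow_natCast, ← Real.rpow_mul ht.le]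
    norm_num
  rw [h1, eLpNorm_const_smul, eLpNorm_dilate _ _ _ hs, hs2, h3,
    Real.enorm_eq_ofReal (by positivity), ENNReal.ofReal_rpow_of_pos (by positivity),
    ← mul_assoc, ← mul_assoc, ← ENNReal.ofReal_mul (by positivity),
    ← ENNReal.ofReal_mul (by positivity), ← Real.rpow_neg_one, ← Real.rpow_mul ht.le,
    ← Real.rpow_add ht, ← Real.rpow_add ht]
  have hz : -gam q - 1 / 2 + 3 / 2 + -1 * (1 / q).toReal = 0 := by
    simp only [gam, one_div, ENNReal.toReal_inv]
    ring
  rw [hz]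
  simp
end
end

section
/- For every r > 0, e^{−r} = (1/(2√π)) ∫₀^∞ λ^{−3/2} e^{−1/(4λ)} e^{−λr²} dλ (the integral being absolutely convergent). -/
open MeasureTheory Real Filter Asymptotics ENNReal

noncomputable section

/-- Primitive of the Gaussian. -/
def subPhi (x : ℝ) : ℝ := ∫ t in (0:ℝ)..x, Real.exp (-1 * t ^ 2)

theorem subPhi_deriv (x : ℝ) : HasDerivAt subPhi (Real.exp (-1 * x ^ 2)) x := by
  have hc : Continuous (fun t : ℝ => Real.exp (-1 * t ^ 2)) := by fun_prop
  exact intervalIntegral.integral_hasDerivAt_right (hc.intervalIntegrable _ _)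
    hc.stronglyMeasurable.stronglyMeasurableAtFilter hc.continuousAt

theorem subPhi_top : Tendsto subPhi atTop (nhds (√π / 2)) := by
  have h := intervalIntegral_tendsto_integral_Ioi (μ := volume) (0:ℝ)
    (integrable_exp_neg_mul_sq (b := 1) one_pos).integrableOn tendsto_id
  rw [integral_gaussian_Ioi, div_one] at h
  exact h

theorem subPhi_neg (x : ℝ) : subPhi (-x) = - subPhi x := by
  unfold subPhi
  have h := intervalIntegral.integral_comp_neg (a := 0) (b := x)
    (fun t : ℝ => Real.exp (-1 * t ^ 2))
  simp only [neg_sq, neg_zero] at h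
  rw [h, intervalIntegral.integral_symm]

theorem subPhi_bot : Tendsto subPhi atBot (nhds (-(√π / 2))) := by
  have h := (subPhi_top.comp tendsto_neg_atBot_atTop).neg
  refine h.congr fun x => ?_
  simp [subPhi_neg]

/-- Primitive of the integrand (up to sign), extended by its limit at zero. -/
def subF (r l : ℝ) : ℝ :=
  if l ≤ 0 then -2 * (Real.exp (-r) * (√π / 2) + Real.exp r * (√π / 2)) else
  -2 * (Real.exp (-r) * subPhi ((√l)⁻¹ / 2 - r * √l) + Real.exp r * subPhi ((√l)⁻¹ / 2 + r * √l))

theorem subF_deriv (r l : ℝ) (hl : 0 < l) : HasDerivAt (subF r)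
    (l ^ (-(3:ℝ)/2) * Real.exp (-(1/(4*l))) * Real.exp (-(l * r ^ 2))) l := by
  have hs : 0 < √l := Real.sqrt_pos.2 hl
  have hsq : √l ^ 2 = l := Real.sq_sqrt hl.le
  have h1 := Real.hasDerivAt_sqrt hl.ne'
  have h2 := (h1.inv hs.ne').div_const 2
  have h3 := h1.const_mul r
  have hm := ((subPhi_deriv _).comp l (h2.sub h3)).const_mul (Real.exp (-r))
  have hp := ((subPhi_deriv _).comp l (h2.add h3)).const_mul (Real.exp r)
  have h := (hm.add hp).const_mul (-2)
  have hev : subF r =ᶠ[nhds l] fun l => -2 * (Real.exp (-r) * subPhi ((√l)⁻¹ / 2 - r * √l)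
      + Real.exp r * subPhi ((√l)⁻¹ / 2 + r * √l)) := by
    filter_upwards [lt_mem_nhds hl] with x hx
    simp [subF, not_le.2 hx]
  refine (h.congr_of_eventuallyEq hev).congr_deriv ?_
  have hpow : l ^ (-(3:ℝ)/2) = (√l ^ 3)⁻¹ := by
    rw [Real.sqrt_eq_rpow, ← Real.rpow_natCast, ← Real.rpow_mul hl.le, ← Real.rpow_neg hl.le]
    norm_num
  have e1 : Real.exp (-r) * Real.exp (-1 * ((√l)⁻¹ / 2 - r * √l) ^ 2)
      = Real.exp (-(1/(4*l))) * Real.exp (-(l * r ^ 2)) := by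
    rw [← Real.exp_add, ← Real.exp_add]
    congr 1
    rw [← hsq, Real.sqrt_sq hs.le]
    field_simp
    ring
  have e2 : Real.exp r * Real.exp (-1 * ((√l)⁻¹ / 2 + r * √l) ^ 2)
      = Real.exp (-(1/(4*l))) * Real.exp (-(l * r ^ 2)) := by
    rw [← Real.exp_add, ← Real.exp_add]
    congr 1
    rw [← hsq, Real.sqrt_sq hs.le]
    field_simp
    ring
  simp only [Pi.sub_apply, Pi.add_apply, Pi.inv_apply]
  rw [← mul_assoc, ← mul_assoc, e1, e2, hpow, mul_assoc, ← hsq, Real.sqrt_sq hs.le]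
  field_simp
  ring

theorem subF_zero (r : ℝ) : ContinuousWithinAt (subF r) (Set.Ici 0) 0 := by
  rw [← Set.Ioi_insert, continuousWithinAt_insert_self]
  have hs : Tendsto (fun l : ℝ => √l) (nhdsWithin 0 (Set.Ioi 0)) (nhdsWithin 0 (Set.Ioi 0)) := by
    refine tendsto_nhdsWithin_iff.2 ⟨?_, ?_⟩
    · have := (Real.continuous_sqrt.tendsto 0).mono_left (nhdsWithin_le_nhds (s := Set.Ioi 0))
      simpa using this
    · filter_upwards [self_mem_nhdsWithin] with x hx
      exact Real.sqrt_pos.2 hx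
  have ha : Tendsto (fun l : ℝ => (√l)⁻¹ / 2) (nhdsWithin 0 (Set.Ioi 0)) atTop :=
    (tendsto_inv_nhdsGT_zero.comp hs).atTop_div_const two_pos
  have hb : Tendsto (fun l : ℝ => r * √l) (nhdsWithin 0 (Set.Ioi 0)) (nhds (r * 0)) :=
    (hs.mono_right nhdsWithin_le_nhds).const_mul r
  have hp := (subPhi_top.comp (ha.atTop_add hb)).const_mul (Real.exp r)
  have hm := (subPhi_top.comp (ha.atTop_add hb.neg)).const_mul (Real.exp (-r))
  have h := (hm.add hp).const_mul (-2)
  have h0 : subF r 0 = -2 * (Real.exp (-r) * (√π / 2) + Real.exp r * (√π / 2)) := by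
    simp [subF]
  unfold ContinuousWithinAt
  rw [h0]
  refine h.congr' ?_
  filter_upwards [self_mem_nhdsWithin] with x hx
  simp [subF, not_le.2 (Set.mem_Ioi.1 hx), sub_eq_add_neg]

theorem subF_top (r : ℝ) (hr : 0 < r) : Tendsto (subF r) atTop
    (nhds (-2 * (Real.exp (-r) * (-(√π / 2)) + Real.exp r * (√π / 2)))) := by
  have hb : Tendsto (fun l : ℝ => r * √l) atTop atTop :=
    Real.tendsto_sqrt_atTop.const_mul_atTop hr
  have ha : Tendsto (fun l : ℝ => (√l)⁻¹ / 2) atTop (nhds (0 / 2)) :=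
    (tendsto_inv_atTop_zero.comp Real.tendsto_sqrt_atTop).div_const 2
  have hp := (subPhi_top.comp (ha.add_atTop hb)).const_mul (Real.exp r)
  have hm := (subPhi_bot.comp (ha.add_atBot (tendsto_neg_atTop_atBot.comp hb))).const_mul
    (Real.exp (-r))
  refine ((hm.add hp).const_mul (-2)).congr' ?_
  filter_upwards [eventually_gt_atTop 0] with x hx
  simp [subF, not_le.2 hx, sub_eq_add_neg]

/-- **Lemma (one-dimensional subordination formula).**
For `r > 0`, `e^{−r} = (1/(2√π)) ∫₀^∞ λ^{−3/2} e^{−1/(4λ)} e^{−λr²} dλ`,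
the integral being absolutely convergent. -/
theorem subordination_formula (r : ℝ) (hr : 0 < r) :
    IntegrableOn
      (fun l : ℝ => l ^ (-(3:ℝ)/2) * Real.exp (-(1/(4*l))) * Real.exp (-(l * r ^ 2)))
      (Set.Ioi 0) volume ∧
    Real.exp (-r) = (2 * Real.sqrt π)⁻¹ *
      ∫ l in Set.Ioi (0:ℝ),
        l ^ (-(3:ℝ)/2) * Real.exp (-(1/(4*l))) * Real.exp (-(l * r ^ 2)) := by
  have hpos : ∀ l ∈ Set.Ioi (0:ℝ),
      0 ≤ l ^ (-(3:ℝ)/2) * Real.exp (-(1/(4*l))) * Real.exp (-(l * r ^ 2)) := by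
    intro l hl
    have := Real.rpow_nonneg (Set.mem_Ioi.1 hl).le (-(3:ℝ)/2)
    positivity
  have hd := fun l (hl : l ∈ Set.Ioi (0:ℝ)) => subF_deriv r l hl
  refine ⟨integrableOn_Ioi_deriv_of_nonneg (subF_zero r) hd hpos (subF_top r hr), ?_⟩
  rw [integral_Ioi_of_hasDerivAt_of_nonneg (subF_zero r) hd hpos (subF_top r hr)]
  have hpi : 0 < √π := Real.sqrt_pos.2 Real.pi_pos
  simp only [subF, le_refl, if_true]
  field_simp
  ring
end
end

section
/- For all a > 0, b > 0 and x ∈ ℝ², ∫_{ℝ²} ∇G(a, x−y) · ∇^⊥G(b, y) dy = 0, i.e. the convolution of the gradient of one heat kernel with the perpendicular gradient of another vanishes identically (as a consequence of ∂₁∂₂G(a+b) − ∂₂∂₁G(a+b) = 0). -/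
open MeasureTheory Real Filter Asymptotics ENNReal

noncomputable section

/-- The `j`-th component of `∇^⊥ = (−∂_2, ∂_1)`. -/
def pdPerp (j : Fin 2) (f : E2 → ℝ) (x : E2) : ℝ :=
  if j = 0 then -pd 1 f x else pd 0 f x

lemma pd_G (t : ℝ) (j : Fin 2) (z : E2) :
    pd j (G t) z = -(2 * z j / (4 * t)) * G t z := by
  have h1 : HasFDerivAt (fun z : E2 => ‖z‖ ^ 2) (2 • (innerSL ℝ z)) z :=
    (hasStrictFDerivAt_norm_sq z).hasFDerivAt
  have h2 := (((h1.neg.mul_const ((4 * t)⁻¹)).exp).const_mul ((4 * π * t)⁻¹))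
  have h3 : HasFDerivAt (G t) _ z := h2
  unfold pd
  rw [h3.fderiv]
  simp [G, div_eq_mul_inv, EuclideanSpace.inner_single_right]
  ring

lemma integrand_eq (a b : ℝ) (x y : E2) :
    ∑ j : Fin 2, pd j (G a) (x - y) * pdPerp j (G b) y =
      (4 / (4 * a * (4 * b))) * (G a (x - y) * G b y) * inner ℝ y (!₂[x 1, -x 0] : E2) := by
  simp [Fin.sum_univ_two, pdPerp, pd_G, PiLp.inner_apply, div_eq_mul_inv]
  ring

/-- **Lemma (orthogonality of heat-kernel gradients).**
`∫ ∇G(a, x−y) · ∇^⊥G(b, y) dy = 0` for all `a, b > 0` and `x ∈ ℝ²`. -/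
theorem grad_conv_gradPerp_eq_zero (a b : ℝ) (ha : 0 < a) (hb : 0 < b) (x : E2) :
    ∫ y : E2, ∑ j : Fin 2, pd j (G a) (x - y) * pdPerp j (G b) y = 0 := by
  simp_rw [integrand_eq]
  set J : E2 := !₂[x 1, -x 0] with hJ
  set R := (Submodule.span ℝ {x}).reflection with hR
  have hx : R x = x := Submodule.reflection_mem_subspace_eq_self
    (Submodule.mem_span_singleton_self x)
  have hRJ : R J = -J := by
    apply Submodule.reflection_mem_subspace_orthogonalComplement_eq_neg
    rw [Submodule.mem_orthogonal_singleton_iff_inner_right]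
    simp [hJ, PiLp.inner_apply, Fin.sum_univ_two]
    ring
  have hin : ∀ y, inner ℝ (R y) J = -inner ℝ y J := by
    intro y
    have := R.inner_map_map y J
    rw [hRJ, inner_neg_right] at this
    linarith
  have hn : ∀ y, ‖x - R y‖ = ‖x - y‖ := by
    intro y
    conv_lhs => rw [← hx, ← map_sub, R.norm_map]
  have key := R.measurePreserving.integral_comp R.toHomeomorph.measurableEmbedding
    (fun y => (4 / (4 * a * (4 * b))) * (G a (x - y) * G b y) * inner ℝ y J)
  have e : ∀ y, (4 / (4 * a * (4 * b))) * (G a (x - R y) * G b (R y)) * inner ℝ (R y) J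
      = -((4 / (4 * a * (4 * b))) * (G a (x - y) * G b y) * inner ℝ y J) := by
    intro y
    rw [hin]
    simp only [G, hn, R.norm_map]
    ring
  simp_rw [e, integral_neg] at key
  linarith
end
end

section
/- For every integer k ≥ 0 and every t > 0, the triple integral ∫₀ᵗ ∫₀^∞ ∫₀^∞ λ^{−3/2} e^{−1/(4λ)} s^{−3} (s²/(2s+σ²λ))^{k+2} dλ dσ ds is finite and equals 2π · ((2k−1)!!/(2k+2)!!) · (t/2)^{k+1/2}, where (−1)!! = 1. In particular its value scales as t^{k+1/2}. -/
open MeasureTheory Real Filter Asymptotics ENNReal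

noncomputable section

lemma aux_int (n : ℕ) : Integrable (fun x : ℝ => ((1 + x ^ 2)⁻¹) ^ (n + 1)) := by
  refine integrable_inv_one_add_sq.mono' (by fun_prop) (Eventually.of_forall fun x => ?_)
  have h0 : 0 ≤ (1 + x ^ 2)⁻¹ := by positivity
  have h1 : (1 + x ^ 2)⁻¹ ≤ 1 := inv_le_one_of_one_le₀ (by nlinarith [sq_nonneg x])
  rw [Real.norm_of_nonneg (by positivity), pow_succ]
  exact mul_le_of_le_one_left h0 (pow_le_one₀ h0 h1)

lemma aux_rec (n : ℕ) : ∫ x in Set.Ioi (0:ℝ), ((1 + x ^ 2)⁻¹) ^ (n + 2) =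
    ((2 * n + 1) / (2 * n + 2) : ℝ) * ∫ x in Set.Ioi (0:ℝ), ((1 + x ^ 2)⁻¹) ^ (n + 1) := by
  have hd : ∀ x ∈ Set.Ici (0:ℝ), HasDerivAt (fun x : ℝ => x * ((1 + x ^ 2)⁻¹) ^ (n + 1))
      ((2 * n + 2) * ((1 + x ^ 2)⁻¹) ^ (n + 2) - (2 * n + 1) * ((1 + x ^ 2)⁻¹) ^ (n + 1)) x := by
    intro x _
    have hp : (1 + x ^ 2) ≠ 0 := by positivity
    have h1 : HasDerivAt (fun x : ℝ => 1 + x ^ 2) (2 * x) x := by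
      simpa using ((hasDerivAt_id x).pow 2).const_add 1
    have h2 := (hasDerivAt_id x).mul ((h1.inv hp).pow (n + 1))
    refine h2.congr_deriv ?_
    simp only [id, Nat.add_sub_cancel, Pi.inv_apply, Pi.pow_apply]
    push_cast
    have h3 : -(2 * x) / (1 + x ^ 2) ^ 2 = -(2 * x) * ((1 + x ^ 2)⁻¹) ^ 2 := by
      rw [inv_pow, div_eq_mul_inv]
    have h4 : x ^ 2 * (1 + x ^ 2)⁻¹ = 1 - (1 + x ^ 2)⁻¹ := by
      field_simp
      ring
    rw [h3]
    generalize (1 + x ^ 2)⁻¹ = u at h4 ⊢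
    linear_combination (-2 * ((n:ℝ) + 1) * u ^ (n + 1)) * h4
  have ht : Tendsto (fun x : ℝ => x * ((1 + x ^ 2)⁻¹) ^ (n + 1)) atTop (nhds 0) := by
    refine squeeze_zero' (g := fun x : ℝ => x⁻¹) ?_ ?_ tendsto_inv_atTop_zero
    · filter_upwards [eventually_gt_atTop 0] with x hx
      positivity
    · filter_upwards [eventually_gt_atTop 0] with x hx
      have h0 : 0 ≤ (1 + x ^ 2)⁻¹ := by positivity
      have h1 : (1 + x ^ 2)⁻¹ ≤ 1 := inv_le_one_of_one_le₀ (by nlinarith [sq_nonneg x])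
      have h2 : ((1 + x ^ 2)⁻¹) ^ (n + 1) ≤ (1 + x ^ 2)⁻¹ := by
        rw [pow_succ]; exact mul_le_of_le_one_left h0 (pow_le_one₀ h0 h1)
      calc x * ((1 + x ^ 2)⁻¹) ^ (n + 1) ≤ x * (1 + x ^ 2)⁻¹ := by gcongr
        _ ≤ x⁻¹ := by
          rw [← div_eq_mul_inv, ← one_div, div_le_div_iff₀ (by positivity) hx]; nlinarith
  have i1 := (aux_int (n + 1)).integrableOn (s := Set.Ioi (0:ℝ)) |>.const_mul (2 * n + 2 : ℝ)
  have i2 := (aux_int n).integrableOn (s := Set.Ioi (0:ℝ)) |>.const_mul (2 * n + 1 : ℝ)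
  have := integral_Ioi_of_hasDerivAt_of_tendsto' hd (i1.sub i2) ht
  rw [integral_sub i1 i2, integral_const_mul, integral_const_mul] at this
  have h3 : (2 * (n:ℝ) + 2) ≠ 0 := by positivity
  simp only [zero_mul, sub_zero] at this
  rw [div_mul_eq_mul_div, eq_div_iff h3]
  linarith

lemma aux_val (n : ℕ) : ∫ x in Set.Ioi (0:ℝ), ((1 + x ^ 2)⁻¹) ^ (n + 2) =
    π / 2 * (2 * n + 1) * ((Nat.doubleFactorial (2 * n - 1) : ℝ) /
          (Nat.doubleFactorial (2 * n + 2) : ℝ)) := by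
  induction n with
  | zero =>
    rw [aux_rec]
    simp
    ring
  | succ n ih =>
    rw [show n + 1 + 2 = (n + 1) + 2 from rfl, aux_rec, show n + 1 + 1 = n + 2 from rfl, ih]
    have e1 : Nat.doubleFactorial (2 * (n + 1) - 1) = (2 * n + 1) * Nat.doubleFactorial (2 * n - 1) := by
      cases n with
      | zero => rfl
      | succ m =>
        rw [show 2 * (m + 1 + 1) - 1 = (2 * m + 1) + 2 by omega,
          show 2 * (m + 1) - 1 = 2 * m + 1 by omega, Nat.doubleFactorial_add_two]
        ring
    have e2 : Nat.doubleFactorial (2 * (n + 1) + 2) = (2 * n + 4) * Nat.doubleFactorial (2 * n + 2) := by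
      rw [show 2 * (n + 1) + 2 = (2 * n + 2) + 2 by omega, Nat.doubleFactorial_add_two]
    rw [e1, e2]
    have : (Nat.doubleFactorial (2 * n + 2) : ℝ) ≠ 0 := by
      exact_mod_cast (Nat.doubleFactorial_pos _).ne'
    push_cast
    field_simp
    ring

lemma aux_l : IntegrableOn (fun l : ℝ => l ^ (-2:ℝ) * Real.exp (-(1/(4*l)))) (Set.Ioi 0) ∧
    ∫ l in Set.Ioi (0:ℝ), l ^ (-2:ℝ) * Real.exp (-(1/(4*l))) = 4 := by
  have hE : Set.EqOn (fun x : ℝ => (|(-1:ℝ)| * x ^ ((-1:ℝ) - 1)) • Real.exp ((-1/4) * x ^ (-1:ℝ)))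
      (fun l : ℝ => l ^ (-2:ℝ) * Real.exp (-(1/(4*l)))) (Set.Ioi 0) := by
    intro x hx
    have : (-1/4) * x ^ (-1:ℝ) = -(1/(4*x)) := by
      rw [Real.rpow_neg_one]; field_simp
    simp only [this]
    norm_num
  constructor
  · rw [← integrableOn_congr_fun hE measurableSet_Ioi,
      integrableOn_Ioi_comp_rpow_iff (fun x => Real.exp ((-1/4) * x)) (by norm_num)]
    exact integrableOn_exp_mul_Ioi (by norm_num) 0
  · rw [← setIntegral_congr_fun measurableSet_Ioi hE,
      integral_comp_rpow_Ioi (fun x => Real.exp ((-1/4) * x)) (by norm_num),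
      integral_exp_mul_Ioi (by norm_num)]
    norm_num

/-- The integrand. -/
def auxF (k : ℕ) (s σ l : ℝ) : ℝ := l ^ (-(3:ℝ)/2) * Real.exp (-(1/(4 * l))) * (s ^ 3)⁻¹ *
          (s ^ 2 / (2 * s + σ ^ 2 * l)) ^ (k + 2)

lemma auxF_nonneg (k : ℕ) {s σ l : ℝ} (hs : 0 < s) (hl : 0 < l) : 0 ≤ auxF k s σ l := by
  unfold auxF; positivity

lemma auxF_meas (k : ℕ) : Measurable (fun p : ℝ × ℝ × ℝ => auxF k p.1 p.2.1 p.2.2) := by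
  unfold auxF; fun_prop

lemma auxF_eq (k : ℕ) {s l : ℝ} (hs : 0 < s) (hl : 0 < l) (σ : ℝ) :
    auxF k s σ l = (l ^ (-(3:ℝ)/2) * Real.exp (-(1/(4 * l))) * (s ^ 3)⁻¹ * (s / 2) ^ (k + 2)) *
      ((1 + (√(l / (2 * s)) * σ) ^ 2)⁻¹) ^ (k + 2) := by
  have : s ^ 2 / (2 * s + σ ^ 2 * l) = s / 2 * (1 + (√(l / (2 * s)) * σ) ^ 2)⁻¹ := by
    rw [mul_pow, Real.sq_sqrt (by positivity)]
    field_simp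
  unfold auxF
  rw [this, mul_pow]
  ring

/-- The Wallis integral. -/
def auxW (k : ℕ) : ℝ := ∫ x in Set.Ioi (0:ℝ), ((1 + x ^ 2)⁻¹) ^ (k + 2)

lemma auxF_int_σ (k : ℕ) {s l : ℝ} (hs : 0 < s) (hl : 0 < l) :
    IntegrableOn (fun σ => auxF k s σ l) (Set.Ioi 0) ∧
    ∫ σ in Set.Ioi (0:ℝ), auxF k s σ l =
      ((s ^ 3)⁻¹ * (s / 2) ^ (k + 2) * √(2 * s) * auxW k) *
        (l ^ (-2:ℝ) * Real.exp (-(1/(4*l)))) := by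
  have hc : 0 < √(l / (2 * s)) := Real.sqrt_pos.mpr (by positivity)
  simp_rw [auxF_eq k hs hl]
  constructor
  · refine Integrable.const_mul ?_ _
    exact (integrableOn_Ioi_comp_mul_left_iff (fun x : ℝ => ((1 + x ^ 2)⁻¹) ^ (k + 2)) 0 hc).2
      (aux_int (k + 1)).integrableOn
  · rw [integral_const_mul,
      integral_comp_mul_left_Ioi (fun x : ℝ => ((1 + x ^ 2)⁻¹) ^ (k + 2)) 0 hc, mul_zero]
    have h1 : l ^ (-2:ℝ) = l ^ (-(3:ℝ)/2) * (√l)⁻¹ := by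
      rw [Real.sqrt_eq_rpow, ← Real.rpow_neg hl.le, ← Real.rpow_add hl]; norm_num
    rw [h1, Real.sqrt_div hl.le, inv_div, smul_eq_mul, auxW]
    ring

lemma auxF_int_σl (k : ℕ) {s : ℝ} (hs : 0 < s) :
    Integrable (fun q : ℝ × ℝ => auxF k s q.1 q.2)
      ((volume.restrict (Set.Ioi 0)).prod (volume.restrict (Set.Ioi 0))) ∧
    ∫ σ in Set.Ioi (0:ℝ), ∫ l in Set.Ioi (0:ℝ), auxF k s σ l =
      ((s ^ 3)⁻¹ * (s / 2) ^ (k + 2) * √(2 * s) * auxW k) * 4 := by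
  have hm : Measurable (fun q : ℝ × ℝ => auxF k s q.1 q.2) :=
    (auxF_meas k).comp measurable_prodMk_left
  have hi : Integrable (fun q : ℝ × ℝ => auxF k s q.1 q.2)
      ((volume.restrict (Set.Ioi 0)).prod (volume.restrict (Set.Ioi 0))) := by
    rw [integrable_prod_iff' hm.aestronglyMeasurable]
    constructor
    · filter_upwards [ae_restrict_mem measurableSet_Ioi] with l hl
      exact (auxF_int_σ k hs hl).1
    · refine (integrableOn_congr_fun ?_ measurableSet_Ioi).mpr
        (aux_l.1.const_mul ((s ^ 3)⁻¹ * (s / 2) ^ (k + 2) * √(2 * s) * auxW k))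
      intro l hl
      simp only
      rw [← (auxF_int_σ k hs hl).2]
      refine integral_congr_ae (Eventually.of_forall fun σ => ?_)
      exact Real.norm_of_nonneg (auxF_nonneg k hs hl)
  refine ⟨hi, ?_⟩
  rw [integral_integral_swap hi,
    setIntegral_congr_fun measurableSet_Ioi (fun l hl => (auxF_int_σ k hs hl).2),
    integral_const_mul, aux_l.2]

lemma aux_s (k : ℕ) {s : ℝ} (hs : 0 < s) :
    ((s ^ 3)⁻¹ * (s / 2) ^ (k + 2) * √(2 * s) * auxW k) * 4 =
      (2 * auxW k * (1 / 2 : ℝ) ^ ((k:ℝ) + 1/2)) * s ^ ((k:ℝ) - 1/2) := by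
  have h1 : s ^ ((k:ℝ) - 1/2) = (s ^ 3)⁻¹ * s ^ (k + 2) * √s := by
    rw [Real.sqrt_eq_rpow, ← Real.rpow_natCast s (k+2), ← Real.rpow_natCast s 3,
      ← Real.rpow_neg hs.le, ← Real.rpow_add hs, ← Real.rpow_add hs]
    push_cast; congr 1; ring
  have h2 : (1 / 2 : ℝ) ^ ((k:ℝ) + 1/2) = 2 * (1 / 2) ^ (k + 2) * √2 := by
    have : √2 = 2 * (1 / 2 : ℝ) ^ (1 / 2 : ℝ) := by
      rw [← Real.sqrt_eq_rpow, one_div, Real.sqrt_inv]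
      have : √2 * √2 = (2:ℝ) := Real.mul_self_sqrt (by norm_num)
      field_simp
      linarith
    rw [this, Real.rpow_add (by norm_num), Real.rpow_natCast]
    ring
  rw [h1, h2, Real.sqrt_mul (by norm_num), div_eq_mul_one_div, mul_pow]
  ring

/-- **Lemma (evaluation of the triple integral in the distortion coefficient).**
`∫₀ᵗ∫₀^∞∫₀^∞ λ^{−3/2} e^{−1/(4λ)} s^{−3} (s²/(2s+σ²λ))^{k+2} dλ dσ ds
  = 2π ((2k−1)!!/(2k+2)!!) (t/2)^{k+1/2}`, with `(−1)!! = 1`. -/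
theorem distortion_triple_integral (k : ℕ) (t : ℝ) (ht : 0 < t) :
    IntegrableOn
      (fun p : ℝ × ℝ × ℝ =>
        p.2.2 ^ (-(3:ℝ)/2) * Real.exp (-(1/(4 * p.2.2))) * (p.1 ^ 3)⁻¹ *
          (p.1 ^ 2 / (2 * p.1 + p.2.1 ^ 2 * p.2.2)) ^ (k + 2))
      (Set.Ioc 0 t ×ˢ Set.Ioi 0 ×ˢ Set.Ioi 0) volume ∧
    (∫ s in Set.Ioc (0:ℝ) t, ∫ σ in Set.Ioi (0:ℝ), ∫ l in Set.Ioi (0:ℝ),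
        l ^ (-(3:ℝ)/2) * Real.exp (-(1/(4 * l))) * (s ^ 3)⁻¹ *
          (s ^ 2 / (2 * s + σ ^ 2 * l)) ^ (k + 2))
      = 2 * π * ((Nat.doubleFactorial (2 * k - 1) : ℝ) /
          (Nat.doubleFactorial (2 * k + 2) : ℝ)) * (t / 2) ^ ((k : ℝ) + 1/2) := by
  have hpos : (-1:ℝ) < (k:ℝ) - 1/2 := by
    have : (0:ℝ) ≤ k := Nat.cast_nonneg k
    linarith
  have hS : IntegrableOn (fun s : ℝ =>
      (2 * auxW k * (1 / 2 : ℝ) ^ ((k:ℝ) + 1/2)) * s ^ ((k:ℝ) - 1/2)) (Set.Ioc 0 t) :=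
    Integrable.const_mul ((intervalIntegrable_iff_integrableOn_Ioc_of_le ht.le).1
      (intervalIntegral.intervalIntegrable_rpow' hpos)) _
  have hv : ∀ s ∈ Set.Ioc (0:ℝ) t,
      ∫ σ in Set.Ioi (0:ℝ), ∫ l in Set.Ioi (0:ℝ), auxF k s σ l =
      (2 * auxW k * (1 / 2 : ℝ) ^ ((k:ℝ) + 1/2)) * s ^ ((k:ℝ) - 1/2) := fun s hs => by
    rw [(auxF_int_σl k hs.1).2, aux_s k hs.1]
  constructor
  · change Integrable (fun p : ℝ × ℝ × ℝ => auxF k p.1 p.2.1 p.2.2) _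
    rw [Measure.volume_eq_prod, Measure.volume_eq_prod, ← Measure.prod_restrict,
      ← Measure.prod_restrict, integrable_prod_iff (auxF_meas k).aestronglyMeasurable]
    constructor
    · filter_upwards [ae_restrict_mem measurableSet_Ioc] with s hs
      exact (auxF_int_σl k hs.1).1
    · refine (integrableOn_congr_fun ?_ measurableSet_Ioc).mpr hS
      intro s hs
      simp only
      rw [← hv s hs, integral_integral (auxF_int_σl k hs.1).1]
      refine integral_congr_ae ?_
      rw [Measure.prod_restrict]
      filter_upwards [ae_restrict_mem (measurableSet_Ioi.prod measurableSet_Ioi)] with q hq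
      exact Real.norm_of_nonneg (auxF_nonneg k hs.1 hq.2)
  · change ∫ s in Set.Ioc (0:ℝ) t, ∫ σ in Set.Ioi (0:ℝ), ∫ l in Set.Ioi (0:ℝ), auxF k s σ l = _
    rw [setIntegral_congr_fun measurableSet_Ioc hv, integral_const_mul,
      ← intervalIntegral.integral_of_le ht.le, integral_rpow (Or.inl hpos)]
    have e : (k:ℝ) - 1/2 + 1 = k + 1/2 := by ring
    have hk : (0:ℝ) < k + 1/2 := by linarith
    rw [e, Real.zero_rpow hk.ne', auxW, aux_val, div_eq_mul_one_div t 2,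
      Real.mul_rpow ht.le (by norm_num)]
    have hk2 : (2:ℝ) * k + 1 ≠ 0 := by linarith
    have e3 : (k:ℝ) + 1/2 = (2 * k + 1) / 2 := by ring
    generalize (1 / 2 : ℝ) ^ ((k:ℝ) + 1/2) = A
    generalize t ^ ((k:ℝ) + 1/2) = B
    rw [e3]
    field_simp
    ring
end
end
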